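/- Let β ≥ γ ≥ 0 be real numbers with β + γ > 1, and let ε > 0. Define α = γ if β > 1, α = γ − ε if β = 1, and α = β + γ − 1 if β < 1. Then there exists a constant C = C(β, γ, ε) > 0 such that for all k₁, k₂ ∈ ℤ, ∑_{n ∈ ℤ} ⟨n − k₁⟩^{−β} ⟨n − k₂⟩^{−γ} ≤ C ⟨k₁ − k₂⟩^{−α}. -/

import Mathlib

open MeasureTheory Real

/-- The Japanese bracket `⟨x⟩ = (1 + x²)^{1/2}`. -/
noncomputable def jpn (x : ℝ) : ℝ := Real.sqrt (1 + x ^ 2)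

/-!
Put `K = ⟨x - y⟩`, so that `K ≤ ⟨n - x⟩ + ⟨n - y⟩`. The larger of the two brackets is comparable to
its sum with `K`, and since `γ ≤ β` the product only grows if the exponent `-β` is moved to the
smaller one. Hence the summand is dominated by `W ⟨n - x⟩ + W ⟨n - y⟩` with
`W t = t ^ (-β) * (t + K) ^ (-γ)`, and it remains to sum `W` over the positive integers. For
`0 ≤ α ≤ γ` with `β + γ - α > 1`, the bound `W t ≤ K ^ (-α) * t ^ (-(β + γ - α))` suffices. If
`β < 1`, the sum is at most `∫₀^∞ W`, which by scaling is a multiple of `K ^ (1 - β - γ)`.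
-/

open Set

section Bracket

lemma one_le_jpn (x : ℝ) : 1 ≤ jpn x :=
  Real.one_le_sqrt.mpr (by linarith [sq_nonneg x])

lemma jpn_pos (x : ℝ) : 0 < jpn x :=
  one_pos.trans_le (one_le_jpn x)

lemma abs_le_jpn (x : ℝ) : |x| ≤ jpn x :=
  Real.abs_le_sqrt (by linarith)

lemma jpn_sub_le (a b : ℝ) : jpn (a - b) ≤ jpn a + jpn b := by
  have hab : -(a * b) ≤ jpn a * jpn b := by
    calc -(a * b) ≤ |a| * |b| := abs_mul a b ▸ neg_le_abs _
      _ ≤ jpn a * jpn b :=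
        mul_le_mul (abs_le_jpn a) (abs_le_jpn b) (abs_nonneg b) (jpn_pos a).le
  have hsq (x : ℝ) : jpn x ^ 2 = 1 + x ^ 2 := Real.sq_sqrt (by positivity)
  refine Real.sqrt_le_iff.mpr ⟨(add_pos (jpn_pos a) (jpn_pos b)).le, ?_⟩
  linarith [hsq a, hsq b, add_sq (jpn a) (jpn b), sub_sq a b]

end Bracket

lemma rpow_neg_le_mul_rpow_neg {p c s t : ℝ} (hp : 0 ≤ p) (hc : 0 < c) (hs : 0 < s)
    (h : s ≤ c * t) : t ^ (-p) ≤ c ^ p * s ^ (-p) := by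
  calc t ^ (-p) ≤ (c⁻¹ * s) ^ (-p) :=
        rpow_le_rpow_of_nonpos (by positivity) ((inv_mul_le_iff₀ hc).mpr h) (by linarith)
    _ = c ^ p * s ^ (-p) := by
        rw [mul_rpow (by positivity) hs.le, rpow_neg_eq_inv_rpow c⁻¹, inv_inv]

/-- The weight `t ^ (-β) * (t + K) ^ (-γ)`, comparable to `K ^ (-γ) * t ^ (-β)` for `0 < t ≤ K` and
to `t ^ (-(β + γ))` for `t ≥ K`. It dominates a product of powers of two brackets whose centres are
at distance about `K`, as a function of the bracket at one centre. -/
noncomputable def twoScaleWeight (β γ K t : ℝ) : ℝ := t ^ (-β) * (t + K) ^ (-γ)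

section TwoScaleWeight

variable {β γ α K a b c t : ℝ}

lemma twoScaleWeight_nonneg (hK : 0 ≤ K) (ht : 0 ≤ t) : 0 ≤ twoScaleWeight β γ K t := by
  unfold twoScaleWeight
  positivity

lemma antitoneOn_twoScaleWeight (hβ : 0 ≤ β) (hγ : 0 ≤ γ) (hK : 0 ≤ K) :
    AntitoneOn (twoScaleWeight β γ K) (Ioi 0) := by
  intro s (hs : 0 < s) t _ hst
  exact mul_le_mul (rpow_le_rpow_of_nonpos hs hst (by linarith))
    (rpow_le_rpow_of_nonpos (by linarith) (by linarith) (by linarith))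
    (rpow_nonneg (by linarith) _) (rpow_nonneg hs.le _)

lemma twoScaleWeight_mul_mul (hc : 0 ≤ c) (hK : 0 ≤ K) (ht : 0 ≤ t) :
    twoScaleWeight β γ (c * K) (c * t) = c ^ (-β) * c ^ (-γ) * twoScaleWeight β γ K t := by
  unfold twoScaleWeight
  rw [← mul_add, mul_rpow hc ht, mul_rpow hc (by positivity)]
  ring

lemma twoScaleWeight_le (hα : 0 ≤ α) (hαγ : α ≤ γ) (hK : 0 < K) (ht : 0 < t) :
    twoScaleWeight β γ K t ≤ K ^ (-α) * t ^ (-(β + γ - α)) := by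
  calc twoScaleWeight β γ K t
      = t ^ (-β) * ((t + K) ^ (-α) * (t + K) ^ (-(γ - α))) := by
        rw [← rpow_add (by positivity), twoScaleWeight]; ring_nf
    _ ≤ t ^ (-β) * (K ^ (-α) * t ^ (-(γ - α))) := by
        gcongr ?_ * (?_ * ?_)
        · exact rpow_le_rpow_of_nonpos hK (by linarith) (by linarith)
        · exact rpow_le_rpow_of_nonpos ht (by linarith) (by linarith)
    _ = K ^ (-α) * t ^ (-(β + γ - α)) := by
        rw [mul_left_comm, ← rpow_add ht]; ring_nf

lemma twoScaleWeight_le_of_le_mul (hβ : 0 ≤ β) (hγ : 0 ≤ γ) (hK : 0 ≤ K) (hc : 1 ≤ c)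
    (ha : 0 < a) (hab : a ≤ c * b) :
    twoScaleWeight β γ K b ≤ c ^ (β + γ) * twoScaleWeight β γ K a := by
  have hc₀ : 0 < c := one_pos.trans_le hc
  have hb : 0 < b := pos_of_mul_pos_right (ha.trans_le hab) hc₀.le
  have h_near : b ^ (-β) ≤ c ^ β * a ^ (-β) := rpow_neg_le_mul_rpow_neg hβ hc₀ ha hab
  have h_far : (b + K) ^ (-γ) ≤ c ^ γ * (a + K) ^ (-γ) :=
    rpow_neg_le_mul_rpow_neg hγ hc₀ (by positivity) (by nlinarith)
  calc twoScaleWeight β γ K b ≤ c ^ β * a ^ (-β) * (c ^ γ * (a + K) ^ (-γ)) := by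
        unfold twoScaleWeight; gcongr
    _ = c ^ (β + γ) * twoScaleWeight β γ K a := by
        rw [rpow_add hc₀, twoScaleWeight]; ring

lemma rpow_neg_mul_rpow_neg_le_twoScaleWeight (hγ : 0 ≤ γ) (hK : 0 ≤ K) (ha : 0 < a)
    (hab : a ≤ b) (hKab : K ≤ a + b) :
    a ^ (-β) * b ^ (-γ) ≤ 3 ^ γ * twoScaleWeight β γ K a := by
  have hb : b ^ (-γ) ≤ 3 ^ γ * (a + K) ^ (-γ) :=
    rpow_neg_le_mul_rpow_neg hγ three_pos (by positivity) (by linarith)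
  calc a ^ (-β) * b ^ (-γ) ≤ a ^ (-β) * (3 ^ γ * (a + K) ^ (-γ)) := by gcongr
    _ = 3 ^ γ * twoScaleWeight β γ K a := mul_left_comm _ _ _

lemma rpow_neg_mul_rpow_neg_le_swap (hβγ : γ ≤ β) (hb : 0 < b) (hba : b ≤ a) :
    a ^ (-β) * b ^ (-γ) ≤ b ^ (-β) * a ^ (-γ) := by
  have ha : 0 < a := hb.trans_le hba
  calc a ^ (-β) * b ^ (-γ) = a ^ (-(β - γ)) * (a ^ (-γ) * b ^ (-γ)) := by
        rw [← mul_assoc, ← rpow_add ha]; ring_nf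
    _ ≤ b ^ (-(β - γ)) * (a ^ (-γ) * b ^ (-γ)) := by
        gcongr ?_ * _
        exact rpow_le_rpow_of_nonpos hb hba (by linarith)
    _ = b ^ (-β) * a ^ (-γ) := by
        rw [mul_left_comm, mul_comm, ← rpow_add hb]; ring_nf

lemma rpow_neg_mul_rpow_neg_le_add (hγ : 0 ≤ γ) (hβγ : γ ≤ β) (hK : 0 ≤ K) (ha : 0 < a)
    (hb : 0 < b) (hKab : K ≤ a + b) :
    a ^ (-β) * b ^ (-γ) ≤ 3 ^ γ * (twoScaleWeight β γ K a + twoScaleWeight β γ K b) := by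
  have hWa := twoScaleWeight_nonneg (β := β) (γ := γ) hK ha.le
  have hWb := twoScaleWeight_nonneg (β := β) (γ := γ) hK hb.le
  rcases le_total a b with hab | hba
  · refine (rpow_neg_mul_rpow_neg_le_twoScaleWeight hγ hK ha hab hKab).trans ?_
    gcongr
    linarith
  · refine (rpow_neg_mul_rpow_neg_le_swap hβγ hb hba).trans <|
      (rpow_neg_mul_rpow_neg_le_twoScaleWeight hγ hK hb hba (by linarith)).trans ?_
    gcongr
    linarith

lemma jpn_rpow_neg_mul_jpn_rpow_neg_le (hγ : 0 ≤ γ) (hβγ : γ ≤ β) (a b : ℝ) :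
    jpn a ^ (-β) * jpn b ^ (-γ) ≤ 3 ^ γ * 2 ^ (β + γ) *
      (twoScaleWeight β γ (jpn (b - a)) (|a| + 1) +
        twoScaleWeight β γ (jpn (b - a)) (|b| + 1)) := by
  have hK : 0 ≤ jpn (b - a) := (jpn_pos _).le
  have h_abs (t : ℝ) : twoScaleWeight β γ (jpn (b - a)) (jpn t) ≤
      2 ^ (β + γ) * twoScaleWeight β γ (jpn (b - a)) (|t| + 1) :=
    twoScaleWeight_le_of_le_mul (hγ.trans hβγ) hγ hK one_le_two (by positivity)
      (by linarith [abs_le_jpn t, one_le_jpn t])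
  refine (rpow_neg_mul_rpow_neg_le_add hγ hβγ hK (jpn_pos a) (jpn_pos b)
    ((jpn_sub_le b a).trans_eq (add_comm _ _))).trans ?_
  rw [mul_assoc, mul_add (2 ^ (β + γ))]
  gcongr
  exacts [h_abs a, h_abs b]

end TwoScaleWeight

section Sums

variable {f : ℝ → ℝ} {β γ α K : ℝ}

lemma summable_and_tsum_comp_abs_intCast_sub_le (anti : AntitoneOn f (Ici 0))
    (nonneg : ∀ t, 0 ≤ t → 0 ≤ f t) (hf : Summable fun n : ℕ ↦ f n) (x : ℝ) :
    (Summable fun n : ℤ ↦ f |n - x|) ∧ ∑' n : ℤ, f |n - x| ≤ 2 * ∑' n : ℕ, f n := by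
  let g : ℤ → ℝ := fun n ↦ f |((n + ⌈x⌉ : ℤ) : ℝ) - x|
  have h_shift : (fun n : ℤ ↦ f |n - x|) ∘ Equiv.addRight ⌈x⌉ = g := rfl
  have g_nonneg (n : ℤ) : 0 ≤ g n := nonneg _ (abs_nonneg _)
  have h_right (n : ℕ) : g n ≤ f n := by
    refine anti (mem_Ici.mpr n.cast_nonneg) (mem_Ici.mpr (abs_nonneg _))
      (le_trans ?_ (le_abs_self _))
    push_cast
    linarith [Int.le_ceil x]
  have h_left (n : ℕ) : g (-(n + 1)) ≤ f n := by
    refine anti (mem_Ici.mpr n.cast_nonneg) (mem_Ici.mpr (abs_nonneg _))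
      (le_trans ?_ (neg_le_abs _))
    push_cast
    linarith [Int.ceil_lt_add_one x]
  have h_sum_right : Summable fun n : ℕ ↦ g n := hf.of_nonneg_of_le (fun _ ↦ g_nonneg _) h_right
  have h_sum_left : Summable fun n : ℕ ↦ g (-(n + 1)) :=
    hf.of_nonneg_of_le (fun _ ↦ g_nonneg _) h_left
  constructor
  · rw [← (Equiv.addRight ⌈x⌉).summable_iff, h_shift]
    exact h_sum_right.of_nat_of_neg_add_one h_sum_left
  · calc ∑' n : ℤ, f |n - x| = ∑' n : ℤ, g n := ((Equiv.addRight ⌈x⌉).tsum_eq _).symm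
      _ = ∑' n : ℕ, g n + ∑' n : ℕ, g (-(n + 1)) :=
        tsum_of_nat_of_neg_add_one h_sum_right h_sum_left
      _ ≤ ∑' n : ℕ, f n + ∑' n : ℕ, f n :=
        add_le_add (h_sum_right.tsum_le_tsum h_right hf) (h_sum_left.tsum_le_tsum h_left hf)
      _ = 2 * ∑' n : ℕ, f n := (two_mul _).symm

/-- Unlike `AntitoneOn.tsum_add_one_le_integral`, this allows `f` to blow up at `0`. -/
lemma tsum_add_one_le_integral_of_antitoneOn_Ioi (anti : AntitoneOn f (Ioi 0))
    (integrable : IntegrableOn f (Ioi 0)) (nonneg : ∀ t, 0 < t → 0 ≤ f t) :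
    ∑' n : ℕ, f (n + 1) ≤ ∫ t in Ioi 0, f t := by
  have anti_Ici : AntitoneOn f (Ici 1) := anti.mono (Ici_subset_Ioi.mpr one_pos)
  have integrable_Ioi : IntegrableOn f (Ioi 1) :=
    integrable.mono_set (Ioi_subset_Ioi zero_le_one)
  have integrable_Ioc : IntegrableOn f (Ioc 0 1) := integrable.mono_set Ioc_subset_Ioi_self
  have nonneg_Ioi : ∀ t ∈ Ioi (1 : ℝ), 0 ≤ f t := fun t ht ↦ nonneg t (one_pos.trans ht)
  have summable : Summable fun n : ℕ ↦ f n :=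
    AntitoneOn.summable_of_integrableOn_Ioi (N := 1) (mod_cast anti_Ici)
      (mod_cast integrable_Ioi) (mod_cast nonneg_Ioi)
  have h_head : f 1 ≤ ∫ t in Ioc 0 1, f t := by
    calc f 1 = ∫ _ in Ioc (0 : ℝ) 1, f 1 := by simp
      _ ≤ ∫ t in Ioc 0 1, f t :=
        setIntegral_mono_on (by simp) integrable_Ioc measurableSet_Ioc
          fun t ht ↦ anti ht.1 (one_pos : (0 : ℝ) < 1) ht.2
  have h_tail : ∑' n : ℕ, f (n + 1 + 1) ≤ ∫ t in Ioi 1, f t := by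
    simpa using AntitoneOn.tsum_comp_add_le_integral 1 (mod_cast anti_Ici)
      (mod_cast integrable_Ioi) (mod_cast nonneg_Ioi)
  calc ∑' n : ℕ, f (n + 1) = f 1 + ∑' n : ℕ, f (n + 1 + 1) := by
        have := ((summable_nat_add_iff 1).mpr summable).tsum_eq_zero_add
        simpa using this
    _ ≤ (∫ t in Ioc 0 1, f t) + ∫ t in Ioi 1, f t := add_le_add h_head h_tail
    _ = ∫ t in Ioi 0, f t := by
        rw [← setIntegral_union Ioc_disjoint_Ioi_same measurableSet_Ioi integrable_Ioc
          integrable_Ioi, Ioc_union_Ioi_eq_Ioi zero_le_one]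

lemma summable_nat_add_one_rpow_neg {s : ℝ} (hs : 1 < s) :
    Summable fun n : ℕ ↦ ((n : ℝ) + 1) ^ (-s) := by
  simpa using (summable_nat_add_iff 1).mpr (Real.summable_nat_rpow.mpr (neg_lt_neg hs))

lemma summable_twoScaleWeight (hγ : 0 ≤ γ) (hsum : 1 < β + γ) (hK : 0 < K) :
    Summable fun n : ℕ ↦ twoScaleWeight β γ K (n + 1) := by
  refine Summable.of_nonneg_of_le (fun n ↦ twoScaleWeight_nonneg hK.le (by positivity))
    (fun n ↦ ?_) (summable_nat_add_one_rpow_neg hsum)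
  simpa using twoScaleWeight_le (β := β) le_rfl hγ hK n.cast_add_one_pos

lemma tsum_twoScaleWeight_le_tsum_rpow (hα : 0 ≤ α) (hαγ : α ≤ γ) (hs : 1 < β + γ - α)
    (hK : 0 < K) :
    ∑' n : ℕ, twoScaleWeight β γ K (n + 1) ≤
      (∑' n : ℕ, ((n : ℝ) + 1) ^ (-(β + γ - α))) * K ^ (-α) := by
  rw [mul_comm, ← tsum_mul_left]
  exact (summable_twoScaleWeight (hα.trans hαγ) (by linarith) hK).tsum_le_tsum
    (fun n ↦ twoScaleWeight_le hα hαγ hK n.cast_add_one_pos)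
    ((summable_nat_add_one_rpow_neg hs).mul_left _)

lemma integrableOn_twoScaleWeight (hγ : 0 ≤ γ) (hβ : β < 1) (hsum : 1 < β + γ) (hK : 0 < K) :
    IntegrableOn (twoScaleWeight β γ K) (Ioi 0) := by
  have h_meas : Measurable (twoScaleWeight β γ K) := by unfold twoScaleWeight; fun_prop
  have h_mono {α : ℝ} {s : Set ℝ} (hα : 0 ≤ α) (hαγ : α ≤ γ) (hs : MeasurableSet s)
      (hs_pos : s ⊆ Ioi 0) (h_int : IntegrableOn (fun t ↦ t ^ (-(β + γ - α))) s) :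
      IntegrableOn (twoScaleWeight β γ K) s := by
    refine (h_int.const_mul (K ^ (-α))).mono' h_meas.aestronglyMeasurable ?_
    filter_upwards [ae_restrict_mem hs] with t ht
    rw [Real.norm_of_nonneg (twoScaleWeight_nonneg hK.le (hs_pos ht).le)]
    exact twoScaleWeight_le hα hαγ hK (hs_pos ht)
  rw [← Ioc_union_Ioi_eq_Ioi zero_le_one]
  refine (h_mono hγ le_rfl measurableSet_Ioc Ioc_subset_Ioi_self ?_).union
    (h_mono le_rfl hγ measurableSet_Ioi (Ioi_subset_Ioi zero_le_one) ?_)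
  · rw [← intervalIntegrable_iff_integrableOn_Ioc_of_le zero_le_one]
    exact intervalIntegral.intervalIntegrable_rpow' (by linarith)
  · exact integrableOn_Ioi_rpow_of_lt (by linarith) one_pos

lemma integral_twoScaleWeight (hK : 0 < K) :
    ∫ t in Ioi 0, twoScaleWeight β γ K t =
      (∫ t in Ioi 0, twoScaleWeight β γ 1 t) * K ^ (-(β + γ - 1)) := by
  calc ∫ t in Ioi 0, twoScaleWeight β γ K t
      = K * ∫ t in Ioi 0, twoScaleWeight β γ K (K * t) := by
        simpa using (integral_comp_mul_left_Ioi' (twoScaleWeight β γ K) 0 hK).symm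
    _ = K * ∫ t in Ioi 0, K ^ (-β) * K ^ (-γ) * twoScaleWeight β γ 1 t := by
        congr 1
        refine setIntegral_congr_fun measurableSet_Ioi fun t (ht : 0 < t) ↦ ?_
        simpa using twoScaleWeight_mul_mul (β := β) (γ := γ) hK.le zero_le_one ht.le
    _ = (∫ t in Ioi 0, twoScaleWeight β γ 1 t) * (K ^ (1 : ℝ) * (K ^ (-β) * K ^ (-γ))) := by
        rw [integral_const_mul, rpow_one]; ring
    _ = (∫ t in Ioi 0, twoScaleWeight β γ 1 t) * K ^ (-(β + γ - 1)) := by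
        rw [← rpow_add hK, ← rpow_add hK]; ring_nf

lemma tsum_twoScaleWeight_le_integral (hβ : 0 ≤ β) (hγ : 0 ≤ γ) (hβ' : β < 1)
    (hsum : 1 < β + γ) (hK : 0 < K) :
    ∑' n : ℕ, twoScaleWeight β γ K (n + 1) ≤
      (∫ t in Ioi 0, twoScaleWeight β γ 1 t) * K ^ (-(β + γ - 1)) :=
  (tsum_add_one_le_integral_of_antitoneOn_Ioi (antitoneOn_twoScaleWeight hβ hγ hK.le)
    (integrableOn_twoScaleWeight hγ hβ' hsum hK)
    fun _ ht ↦ twoScaleWeight_nonneg hK.le ht.le).trans_eq (integral_twoScaleWeight hK)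

lemma summable_and_tsum_jpn_mul_jpn_le (hγ : 0 ≤ γ) (hβγ : γ ≤ β) (hsum : 1 < β + γ) (x y : ℝ) :
    (Summable fun n : ℤ ↦ jpn (n - x) ^ (-β) * jpn (n - y) ^ (-γ)) ∧
      ∑' n : ℤ, jpn (n - x) ^ (-β) * jpn (n - y) ^ (-γ) ≤
        4 * 3 ^ γ * 2 ^ (β + γ) * ∑' n : ℕ, twoScaleWeight β γ (jpn (x - y)) (n + 1) := by
  have hβ : 0 ≤ β := hγ.trans hβγ
  set K := jpn (x - y)
  have hK : 0 < K := jpn_pos _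
  let f : ℝ → ℝ := fun t ↦ twoScaleWeight β γ K (t + 1)
  have f_anti : AntitoneOn f (Ici 0) := fun s (hs : 0 ≤ s) t (ht : 0 ≤ t) hst ↦
    antitoneOn_twoScaleWeight hβ hγ hK.le (add_pos_of_nonneg_of_pos hs one_pos)
      (add_pos_of_nonneg_of_pos ht one_pos) (by linarith)
  have f_nonneg (t : ℝ) (ht : 0 ≤ t) : 0 ≤ f t := twoScaleWeight_nonneg hK.le (by linarith)
  have f_summable : Summable fun n : ℕ ↦ f n := summable_twoScaleWeight hγ hsum hK
  have h_le (n : ℤ) : jpn (n - x) ^ (-β) * jpn (n - y) ^ (-γ) ≤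
      3 ^ γ * 2 ^ (β + γ) * (f |n - x| + f |n - y|) := by
    simpa [f, K] using jpn_rpow_neg_mul_jpn_rpow_neg_le hγ hβγ (n - x) (n - y)
  obtain ⟨h_sum_x, h_tsum_x⟩ :=
    summable_and_tsum_comp_abs_intCast_sub_le f_anti f_nonneg f_summable x
  obtain ⟨h_sum_y, h_tsum_y⟩ :=
    summable_and_tsum_comp_abs_intCast_sub_le f_anti f_nonneg f_summable y
  have h_sum_bound := (h_sum_x.add h_sum_y).mul_left (3 ^ γ * 2 ^ (β + γ))
  have h_summable := h_sum_bound.of_nonneg_of_le (fun n : ℤ ↦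
    mul_nonneg (rpow_nonneg (jpn_pos (n - x)).le _) (rpow_nonneg (jpn_pos (n - y)).le _)) h_le
  refine ⟨h_summable, ?_⟩
  calc ∑' n : ℤ, jpn (n - x) ^ (-β) * jpn (n - y) ^ (-γ)
      ≤ 3 ^ γ * 2 ^ (β + γ) * (∑' n : ℤ, f |n - x| + ∑' n : ℤ, f |n - y|) := by
        rw [← h_sum_x.tsum_add h_sum_y, ← tsum_mul_left]
        exact h_summable.tsum_le_tsum h_le h_sum_bound
    _ ≤ 3 ^ γ * 2 ^ (β + γ) * (2 * ∑' n : ℕ, f n + 2 * ∑' n : ℕ, f n) := by gcongr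
    _ = 4 * 3 ^ γ * 2 ^ (β + γ) * ∑' n : ℕ, f n := by ring

lemma exists_tsum_twoScaleWeight_le {ε : ℝ} (hγ : 0 ≤ γ) (hβγ : γ ≤ β) (hsum : 1 < β + γ)
    (hε : 0 < ε) :
    ∃ C : ℝ, ∀ K, 1 ≤ K → ∑' n : ℕ, twoScaleWeight β γ K (n + 1) ≤
      C * K ^ (-(if 1 < β then γ else if β = 1 then γ - ε else β + γ - 1)) := by
  split_ifs with hβ₁ hβ₂
  · exact ⟨_, fun K hK ↦
      tsum_twoScaleWeight_le_tsum_rpow hγ le_rfl (by linarith) (one_pos.trans_le hK)⟩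
  · have hα : max (γ - ε) 0 < γ := max_lt (by linarith) (by linarith)
    refine ⟨∑' n : ℕ, ((n : ℝ) + 1) ^ (-(β + γ - max (γ - ε) 0)), fun K hK ↦
      (tsum_twoScaleWeight_le_tsum_rpow (le_max_right (γ - ε) 0) hα.le (by linarith)
        (one_pos.trans_le hK)).trans ?_⟩
    gcongr
    exact le_max_left _ _
  · exact ⟨_, fun K hK ↦ tsum_twoScaleWeight_le_integral (hγ.trans hβγ) hγ
      (lt_of_le_of_ne (not_lt.mp hβ₁) hβ₂) hsum (one_pos.trans_le hK)⟩

end Sums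

theorem convolution_bracket_sum_general (β γ ε : ℝ) (hγ : 0 ≤ γ) (hβγ : γ ≤ β)
    (hsum : 1 < β + γ) (hε : 0 < ε) :
    ∃ C : ℝ, 0 < C ∧ ∀ x y : ℝ,
      (Summable fun n : ℤ ↦ jpn (n - x) ^ (-β) * jpn (n - y) ^ (-γ)) ∧
      (∑' n : ℤ, jpn (n - x) ^ (-β) * jpn (n - y) ^ (-γ))
        ≤ C * jpn (x - y) ^
            (-(if 1 < β then γ else if β = 1 then γ - ε else β + γ - 1)) := by
  obtain ⟨A, hA⟩ := exists_tsum_twoScaleWeight_le hγ hβγ hsum hε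
  refine ⟨4 * 3 ^ γ * 2 ^ (β + γ) * max A 1, by positivity, fun x y ↦ ?_⟩
  obtain ⟨h_summable, h_tsum⟩ := summable_and_tsum_jpn_mul_jpn_le hγ hβγ hsum x y
  refine ⟨h_summable, h_tsum.trans ?_⟩
  rw [mul_assoc _ (max A 1)]
  gcongr
  exact (hA _ (one_le_jpn _)).trans <|
    mul_le_mul_of_nonneg_right (le_max_left A 1) (rpow_nonneg (jpn_pos _).le _)

/-- Convolution-type estimate for Japanese bracket weights (sum over `ℤ`). -/
theorem convolution_bracket_sum (β γ ε : ℝ) (hγ : 0 ≤ γ) (hβγ : γ ≤ β)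
    (hsum : 1 < β + γ) (hε : 0 < ε) :
    ∃ C : ℝ, 0 < C ∧ ∀ k₁ k₂ : ℤ,
      (∑' n : ℤ, jpn ((n : ℝ) - k₁) ^ (-β) * jpn ((n : ℝ) - k₂) ^ (-γ))
        ≤ C * jpn ((k₁ : ℝ) - k₂) ^
            (-(if 1 < β then γ else if β = 1 then γ - ε else β + γ - 1)) := by
  obtain ⟨C, hC, h⟩ := convolution_bracket_sum_general β γ ε hγ hβγ hsum hε
  exact ⟨C, hC, fun k₁ k₂ ↦ (h k₁ k₂).2⟩
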